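/- arXiv:2006.12413 — 5 statements merged into one kernel-verified Lean document; each statement's English description precedes it below -/
import Mathlib

section
/- Fix positive integers M, N, a real T > 0, set Δf = 1/T, and let g be the rectangular pulse g(t) = 1/√T for 0 ≤ t < T and g(t) = 0 otherwise. Then the Zak transform of the OTFS transmit signal x(t) satisfies, for all τ, ν ∈ ℝ, Z_x(τ, ν) = Σ_{k=0}^{N−1} Σ_{l=0}^{M−1} x[k,l]·Φ_{k,l}(τ, ν), where Φ_{k,l}(τ, ν) := (Z_g(τ, ν)/(MN)) · Σ_{m=0}^{M−1} Σ_{n=0}^{N−1} e^{−2πi n T (ν − kΔf/N)}·e^{2πi m Δf (τ − lT/M)} and Z_g(τ, ν) = e^{2πi ν T ⌊τ/T⌋}. -/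
open Complex Real Finset

/-- The Zak transform of `f : ℝ → ℂ` with period `T`:
`Z_f(τ, ν) := √T · Σ_{k ∈ ℤ} f(τ + kT)·e^{−2πi k ν T}`. -/
noncomputable def zak (T : ℝ) (f : ℝ → ℂ) (τ ν : ℝ) : ℂ :=
  (Real.sqrt T : ℂ) * ∑' k : ℤ, f (τ + k * T) * Complex.exp (-2 * π * I * k * ν * T)

/-!
Sampling along `τ + ℤT`, the Zak transform turns a translation by `nT` into multiplication by
`e^{−2πinνT}` and multiplication by a `T`-periodic function `p` into multiplication by `p τ`.
As `Δf = 1/T`, every subcarrier `e^{2πimΔft}` is `T`-periodic, so for any pulse `g` with summable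
samples the transform of the transmit signal is `Z_g` times a trigonometric polynomial in `(τ, ν)`
with coefficients `X[n,m]`. For the rectangular pulse only the sample `k = −⌊τ/T⌋` is nonzero.
-/

section Zak

variable {T τ ν : ℝ} {f : ℝ → ℂ}

theorem summable_mul_zak_phase (hf : Summable fun k : ℤ ↦ f (τ + k * T)) :
    Summable fun k : ℤ ↦ f (τ + k * T) * Complex.exp (-2 * π * I * k * ν * T) :=
  .of_norm (by simpa [Complex.norm_exp] using hf.norm)

theorem zak_finsetSum {ι : Type*} {s : Finset ι} {f : ι → ℝ → ℂ}
    (hf : ∀ i ∈ s, Summable fun k : ℤ ↦ f i (τ + k * T)) :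
    zak T (fun t ↦ ∑ i ∈ s, f i t) τ ν = ∑ i ∈ s, zak T (f i) τ ν := by
  simp only [zak, Finset.sum_mul, ← Finset.mul_sum]
  rw [Summable.tsum_finsetSum fun i hi ↦ summable_mul_zak_phase (hf i hi)]

theorem zak_comp_sub_intCast_mul (n : ℤ) :
    zak T (fun t ↦ f (t - n * T)) τ ν = Complex.exp (-2 * π * I * n * ν * T) * zak T f τ ν := by
  have shifted_term (k : ℤ) :
      f (τ + (k + n : ℤ) * T - n * T) * Complex.exp (-2 * π * I * (k + n : ℤ) * ν * T) =
        Complex.exp (-2 * π * I * n * ν * T) *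
          (f (τ + k * T) * Complex.exp (-2 * π * I * k * ν * T)) := by
    rw [mul_left_comm, ← Complex.exp_add]
    push_cast
    ring_nf
  rw [zak, ← (Equiv.addRight n).tsum_eq]
  simp only [Equiv.coe_addRight, shifted_term]
  rw [tsum_mul_left, mul_left_comm, zak]

theorem zak_mul_periodic {p : ℝ → ℂ} (hp : Function.Periodic p T) :
    zak T (fun t ↦ f t * p t) τ ν = p τ * zak T f τ ν := by
  have sample (k : ℤ) : p (τ + k * T) = p τ := hp.int_mul k τ
  simp only [zak, sample, mul_right_comm _ (p τ)]
  rw [tsum_mul_right, ← mul_assoc, mul_comm]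

theorem zak_const_mul (c : ℂ) : zak T (fun t ↦ c * f t) τ ν = c * zak T f τ ν := by
  simpa only [mul_comm c] using zak_mul_periodic (p := fun _ ↦ c) fun _ ↦ rfl

theorem summable_comp_sub_intCast_mul (hf : Summable fun k : ℤ ↦ f (τ + k * T)) (n : ℤ) :
    Summable fun k : ℤ ↦ f (τ + k * T - n * T) := by
  have sample (k : ℤ) : τ + k * T - n * T = τ + (k - n : ℤ) * T := by
    push_cast
    ring
  simp only [sample]
  exact (Equiv.subRight n).summable_iff.mpr hf

theorem summable_mul_periodic {p : ℝ → ℂ} (hp : Function.Periodic p T)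
    (hf : Summable fun k : ℤ ↦ f (τ + k * T)) :
    Summable fun k : ℤ ↦ f (τ + k * T) * p (τ + k * T) := by
  have sample (k : ℤ) : p (τ + k * T) = p τ := hp.int_mul k τ
  simpa only [sample] using hf.mul_right (p τ)

end Zak

section RectangularPulse

variable {T τ ν : ℝ}

/-- The rectangular pulse of unit energy on `[0, T)`. -/
noncomputable def rectPulse (T t : ℝ) : ℂ :=
  if 0 ≤ t ∧ t < T then (1 / Real.sqrt T : ℂ) else 0

theorem add_intCast_mul_mem_Ico_iff (hT : 0 < T) (k : ℤ) :
    τ + k * T ∈ Set.Ico 0 T ↔ k = -⌊τ / T⌋ := by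
  rw [eq_comm, neg_eq_iff_eq_neg, Int.floor_eq_iff, le_div_iff₀ hT, div_lt_iff₀ hT, Set.mem_Ico]
  push_cast
  constructor <;> rintro ⟨lower, upper⟩ <;> constructor <;> linarith

theorem rectPulse_add_intCast_mul (hT : 0 < T) (k : ℤ) :
    rectPulse T (τ + k * T) = if k = -⌊τ / T⌋ then (1 / Real.sqrt T : ℂ) else 0 := by
  simp only [rectPulse, ← Set.mem_Ico, add_intCast_mul_mem_Ico_iff hT]

theorem summable_rectPulse (hT : 0 < T) : Summable fun k : ℤ ↦ rectPulse T (τ + k * T) := by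
  simp only [rectPulse_add_intCast_mul hT]
  exact (hasSum_ite_eq _ _).summable

theorem zak_rectPulse (hT : 0 < T) :
    zak T (rectPulse T) τ ν = Complex.exp (2 * π * I * ν * T * (⌊τ / T⌋ : ℤ)) := by
  have sqrt_ne_zero : (Real.sqrt T : ℂ) ≠ 0 := mod_cast (Real.sqrt_pos.mpr hT).ne'
  simp only [zak, rectPulse_add_intCast_mul hT, ite_mul, zero_mul, tsum_ite_eq]
  rw [← mul_assoc, mul_one_div_cancel sqrt_ne_zero, one_mul]
  push_cast
  ring_nf

end RectangularPulse

section Modulation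

variable {T Δf τ ν : ℝ} {g : ℝ → ℂ}

/-- The pulse `g(t − nT)·e^{2πimΔf(t − nT)}` sent in time slot `n` on subcarrier `m`. -/
noncomputable def timeFreqAtom (T Δf : ℝ) (g : ℝ → ℂ) (n m : ℤ) (t : ℝ) : ℂ :=
  g (t - n * T) * Complex.exp (2 * π * I * (m * Δf * (t - n * T : ℝ)))

theorem periodic_subcarrier (hΔf : Δf * T = 1) (m : ℤ) :
    Function.Periodic (fun t : ℝ ↦ Complex.exp (2 * π * I * (m * Δf * t))) T := by
  intro t
  refine Complex.exp_eq_exp_iff_exists_int.mpr ⟨m, ?_⟩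
  have spacing : (Δf * T : ℂ) = 1 := mod_cast hΔf
  push_cast
  linear_combination 2 * π * I * m * spacing

theorem summable_timeFreqAtom (hΔf : Δf * T = 1) (hg : Summable fun k : ℤ ↦ g (τ + k * T))
    (n m : ℤ) : Summable fun k : ℤ ↦ timeFreqAtom T Δf g n m (τ + k * T) := by
  have summable_pulse := summable_mul_periodic (periodic_subcarrier hΔf m) hg
  exact summable_comp_sub_intCast_mul
    (f := fun t ↦ g t * Complex.exp (2 * π * I * (m * Δf * t))) summable_pulse n

theorem zak_timeFreqAtom (hΔf : Δf * T = 1) (n m : ℤ) :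
    zak T (timeFreqAtom T Δf g n m) τ ν =
      Complex.exp (-2 * π * I * n * ν * T) *
        (Complex.exp (2 * π * I * (m * Δf * τ)) * zak T g τ ν) := by
  rw [← zak_mul_periodic (periodic_subcarrier hΔf m), ← zak_comp_sub_intCast_mul]
  rfl

/-- The inverse symplectic finite Fourier transform, taking the delay-Doppler symbols `x[k,l]` to
the time-frequency symbols `X[n,m]`; `k, n < N` index Doppler and time, `l, m < M` delay and
frequency. -/
noncomputable def isfft (M N : ℕ) (x : ℕ → ℕ → ℂ) (n m : ℕ) : ℂ :=
  (1 / (M * N) : ℂ) * ∑ k ∈ range N, ∑ l ∈ range M,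
    x k l * Complex.exp (-2 * π * I * ((m * l : ℝ) / M - (n * k : ℝ) / N))

/-- The OTFS transmit signal with pulse `g`, carrying the delay-Doppler symbols `x[k,l]`. The
subcarrier spacing `Δf` is a parameter; OTFS takes `Δf = 1/T`. -/
noncomputable def otfsSignal (M N : ℕ) (T Δf : ℝ) (g : ℝ → ℂ) (x : ℕ → ℕ → ℂ) (t : ℝ) : ℂ :=
  ∑ m ∈ range M, ∑ n ∈ range N, isfft M N x n m * timeFreqAtom T Δf g n m t

theorem sum_isfft_mul (M N : ℕ) (x c : ℕ → ℕ → ℂ) :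
    ∑ m ∈ range M, ∑ n ∈ range N, isfft M N x n m * c n m =
      ∑ k ∈ range N, ∑ l ∈ range M, x k l * ((1 / (M * N) : ℂ) *
        ∑ m ∈ range M, ∑ n ∈ range N,
          Complex.exp (-2 * π * I * ((m * l : ℝ) / M - (n * k : ℝ) / N)) * c n m) := by
  simp only [isfft, Finset.mul_sum, Finset.sum_mul]
  rw [← Finset.sum_product', Finset.sum_comm]
  refine Finset.sum_congr rfl fun k _ ↦ ?_
  rw [Finset.sum_comm]
  refine Finset.sum_congr rfl fun l _ ↦ ?_
  rw [Finset.sum_product]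
  refine Finset.sum_congr rfl fun m _ ↦ Finset.sum_congr rfl fun n _ ↦ ?_
  ring

theorem isfft_phase_mul_zak_phase (hΔf : Δf * T = 1) (M N k l m n : ℕ) :
    Complex.exp (-2 * π * I * ((m * l : ℝ) / M - (n * k : ℝ) / N)) *
        (Complex.exp (-2 * π * I * n * ν * T) * Complex.exp (2 * π * I * (m * Δf * τ))) =
      Complex.exp (-2 * π * I * ((n : ℝ) * T * (ν - k * Δf / N))) *
        Complex.exp (2 * π * I * ((m : ℝ) * Δf * (τ - l * T / M))) := by
  have spacing : (Δf * T : ℂ) = 1 := mod_cast hΔf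
  simp only [← Complex.exp_add]
  congr 1
  push_cast
  linear_combination 2 * π * I * (m * l / M - n * k / N) * spacing

theorem zak_otfsSignal (hΔf : Δf * T = 1) (hg : Summable fun k : ℤ ↦ g (τ + k * T))
    (M N : ℕ) (x : ℕ → ℕ → ℂ) :
    zak T (otfsSignal M N T Δf g x) τ ν =
      (∑ m ∈ range M, ∑ n ∈ range N, isfft M N x n m *
        (Complex.exp (-2 * π * I * n * ν * T) * Complex.exp (2 * π * I * (m * Δf * τ)))) *
          zak T g τ ν := by
  let subcarrierSignal (m : ℕ) (t : ℝ) : ℂ :=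
    ∑ n ∈ range N, isfft M N x n m * timeFreqAtom T Δf g n m t
  have summable_term (m n : ℕ) :
      Summable fun k : ℤ ↦ isfft M N x n m * timeFreqAtom T Δf g n m (τ + k * T) :=
    (summable_timeFreqAtom hΔf hg n m).mul_left _
  calc zak T (fun t ↦ ∑ m ∈ range M, subcarrierSignal m t) τ ν
    _ = ∑ m ∈ range M, zak T (subcarrierSignal m) τ ν :=
      zak_finsetSum fun m _ ↦ summable_sum fun n _ ↦ summable_term m n
    _ = ∑ m ∈ range M, ∑ n ∈ range N,
          zak T (fun t ↦ isfft M N x n m * timeFreqAtom T Δf g n m t) τ ν :=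
      Finset.sum_congr rfl fun m _ ↦ zak_finsetSum fun n _ ↦ summable_term m n
    _ = (∑ m ∈ range M, ∑ n ∈ range N, isfft M N x n m *
          (Complex.exp (-2 * π * I * n * ν * T) * Complex.exp (2 * π * I * (m * Δf * τ)))) *
            zak T g τ ν := by
      simp only [zak_const_mul, zak_timeFreqAtom hΔf, Int.cast_natCast, Finset.sum_mul, mul_assoc]

end Modulation

theorem zak_of_otfs_signal_general (M N : ℕ) {T : ℝ} (hT : 0 < T) {Δf : ℝ} (hΔf : Δf = 1 / T)
    (g : ℝ → ℂ) (x : ℕ → ℕ → ℂ) {τ : ℝ} (hg : Summable fun k : ℤ ↦ g (τ + k * T)) (ν : ℝ) :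
    zak T (otfsSignal M N T Δf g x) τ ν = ∑ k ∈ range N, ∑ l ∈ range M, x k l *
      (zak T g τ ν / (M * N) *
        ∑ m ∈ range M, ∑ n ∈ range N,
          Complex.exp (-2 * π * I * ((n : ℝ) * T * (ν - k * Δf / N))) *
            Complex.exp (2 * π * I * ((m : ℝ) * Δf * (τ - l * T / M)))) := by
  have spacing : Δf * T = 1 := by rw [hΔf, one_div_mul_cancel hT.ne']
  rw [zak_otfsSignal spacing hg, sum_isfft_mul]
  simp only [isfft_phase_mul_zak_phase spacing, Finset.sum_mul]
  refine Finset.sum_congr rfl fun k _ ↦ Finset.sum_congr rfl fun l _ ↦ ?_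
  ring

/-- The Zak transform of the OTFS transmit signal (with the rectangular pulse) is
`Z_x(τ,ν) = Σ_{k,l} x[k,l] Φ_{k,l}(τ,ν)` with
`Φ_{k,l}(τ,ν) = (Z_g(τ,ν)/(MN)) Σ_{m,n} e^{−2πinT(ν−kΔf/N)} e^{2πimΔf(τ−lT/M)}`
and `Z_g(τ,ν) = e^{2πiνT⌊τ/T⌋}`. -/
theorem zak_of_otfs_signal (M N : ℕ) (hM : 0 < M) (hN : 0 < N)
    (T : ℝ) (hT : 0 < T) (Δf : ℝ) (hΔf : Δf = 1 / T)
    (g : ℝ → ℂ) (hg : ∀ t : ℝ, g t = if 0 ≤ t ∧ t < T then (1 / Real.sqrt T : ℂ) else 0)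
    (x : ℕ → ℕ → ℂ)
    (X : ℕ → ℕ → ℂ)
    (hX : ∀ n m : ℕ, X n m = (1 / (M * N) : ℂ) * ∑ k ∈ range N, ∑ l ∈ range M,
      x k l * Complex.exp (-2 * π * I * ((m * l : ℝ) / M - (n * k : ℝ) / N)))
    (xsig : ℝ → ℂ)
    (hx : ∀ t : ℝ, xsig t = ∑ m ∈ range M, ∑ n ∈ range N,
      X n m * g (t - n * T) * Complex.exp (2 * π * I * ((m : ℝ) * Δf * (t - n * T)))) :
    ∀ τ ν : ℝ,
      zak T xsig τ ν = ∑ k ∈ range N, ∑ l ∈ range M, x k l *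
        (Complex.exp (2 * π * I * ν * T * (⌊τ / T⌋ : ℤ)) / (M * N) *
          ∑ m ∈ range M, ∑ n ∈ range N,
            Complex.exp (-2 * π * I * ((n : ℝ) * T * (ν - k * Δf / N))) *
              Complex.exp (2 * π * I * ((m : ℝ) * Δf * (τ - l * T / M)))) := by
  obtain rfl : g = rectPulse T := funext hg
  obtain rfl : X = isfft M N x := funext₂ hX
  obtain rfl : xsig = otfsSignal M N T Δf (rectPulse T) x :=
    funext fun t ↦ by simp [hx, otfsSignal, timeFreqAtom, mul_assoc]
  intro τ ν
  rw [zak_of_otfs_signal_general M N hT hΔf _ x (summable_rectPulse hT), zak_rectPulse hT]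
end

section
/- Fix positive integers M, N, a real T > 0, set Δf = 1/T, and let q be an integer with 0 ≤ q ≤ M−1. Consider a single-path channel (L = 1) with gain h₁ ∈ ℂ, zero delay τ₁ = 0 and Doppler shift ν₁ = qΔf. Then the effective delay-Doppler channel of the Zak receiver, h̃[k',l',k,l] := h₁·e^{2πi (ν₁/Δf)(l'/M)}·e^{2πi (k'/N − ν₁/Δf)·⌊l'/M⌋}·w₁((k'−k)Δf/N − ν₁)·w₂((l'−l)T/M), satisfies h̃[k',l',k,l] = h₁·e^{2πi q l'/M}·δ[k − k']·δ[l − l'] for all 0 ≤ k, k' ≤ N−1 and 0 ≤ l, l' ≤ M−1, where δ[0] = 1 and δ[m] = 0 for m ≠ 0. That is, the Zak-receiver delay-Doppler channel matrix is diagonal with unit-modulus-times-h₁ entries. -/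
open Complex Real Finset

/-- The basic Doppler-domain pulse `w₁(ν) := (1/N) Σ_{n=0}^{N−1} e^{−2πi n ν T}`. -/
noncomputable def w1 (N : ℕ) (T : ℝ) (ν : ℝ) : ℂ :=
  (1 / N : ℂ) * ∑ n ∈ range N, Complex.exp (-2 * π * I * n * ν * T)

/-- The basic delay-domain pulse `w₂(τ) := (1/M) Σ_{m=0}^{M−1} e^{2πi m Δf τ}` with
`Δf = 1/T`. -/
noncomputable def w2 (M : ℕ) (T : ℝ) (τ : ℝ) : ℂ :=
  (1 / M : ℂ) * ∑ m ∈ range M, Complex.exp (2 * π * I * m * (1 / T) * τ)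

/-!
At a grid point `ν = d Δf / N` the Doppler pulse is the mean over `n < N` of the powers of an
`N`-th root of unity, and that root equals `1` exactly when `N ∣ d`; likewise for the delay pulse.
So both pulses are Kronecker combs on the grid. The Doppler pulse is moreover `Δf`-periodic, which
makes an integer Doppler shift `q Δf` invisible to it: the shift survives only in the phase.
-/

theorem geom_sum_eq_ite_of_pow_eq_one {K : Type*} [DivisionRing K] [DecidableEq K] {z : K} {n : ℕ}
    (hz : z ^ n = 1) : ∑ i ∈ range n, z ^ i = if z = 1 then (n : K) else 0 := by
  split_ifs with h
  · simp [h]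
  · rw [geom_sum_eq h, hz, sub_self, zero_div]

theorem exp_two_pi_I_mul_int_div_eq_one_iff {n : ℕ} (hn : n ≠ 0) (d : ℤ) :
    Complex.exp (2 * π * I * (d / n)) = 1 ↔ (n : ℤ) ∣ d := by
  rw [← (isPrimitiveRoot_exp n hn).zpow_eq_one_iff_dvd, ← Complex.exp_int_mul,
    mul_div_left_comm]

theorem mean_exp_two_pi_I_mul_int_div {n : ℕ} (hn : n ≠ 0) (d : ℤ) :
    (1 / n : ℂ) * ∑ j ∈ range n, Complex.exp (j * (2 * π * I * (d / n))) =
      if (n : ℤ) ∣ d then 1 else 0 := by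
  have hn' : (n : ℂ) ≠ 0 := Nat.cast_ne_zero.mpr hn
  have root_pow : Complex.exp (2 * π * I * (d / n)) ^ n = 1 := by
    rw [← Complex.exp_nat_mul, ← Complex.exp_int_mul_two_pi_mul_I d]
    congr 1
    field_simp
  simp only [Complex.exp_nat_mul, geom_sum_eq_ite_of_pow_eq_one root_pow,
    exp_two_pi_I_mul_int_div_eq_one_iff hn]
  split_ifs <;> simp [hn']

theorem w1_periodic (N : ℕ) {T : ℝ} (hT : T ≠ 0) : Function.Periodic (w1 N T) (1 / T) := by
  intro ν
  have hT' : (T : ℂ) ≠ 0 := ofReal_ne_zero.mpr hT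
  unfold w1
  congr 1
  refine sum_congr rfl fun n _ ↦ Complex.exp_eq_exp_iff_exists_int.mpr ⟨-n, ?_⟩
  push_cast
  field_simp
  ring

theorem w1_int_mul_div {N : ℕ} (hN : N ≠ 0) {T : ℝ} (hT : T ≠ 0) (d : ℤ) :
    w1 N T (d * (1 / T) / N) = if (N : ℤ) ∣ d then 1 else 0 := by
  have hT' : (T : ℂ) ≠ 0 := ofReal_ne_zero.mpr hT
  simp only [← dvd_neg (b := d), ← mean_exp_two_pi_I_mul_int_div hN, w1]
  congr! 3
  push_cast
  field_simp

theorem w2_int_mul_div {M : ℕ} (hM : M ≠ 0) {T : ℝ} (hT : T ≠ 0) (d : ℤ) :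
    w2 M T (d * T / M) = if (M : ℤ) ∣ d then 1 else 0 := by
  have hT' : (T : ℂ) ≠ 0 := ofReal_ne_zero.mpr hT
  rw [← mean_exp_two_pi_I_mul_int_div hM, w2]
  congr! 3
  push_cast
  field_simp

theorem exp_two_pi_I_mul_sub_int_mul_int (x : ℂ) (q m : ℤ) :
    Complex.exp (2 * π * I * ((x - q) * m)) = Complex.exp (2 * π * I * (x * m)) :=
  Complex.exp_eq_exp_iff_exists_int.mpr ⟨-(q * m), by push_cast; ring⟩

theorem floor_div_eq_zero_of_nonneg_of_lt {K : Type*} [Field K] [LinearOrder K]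
    [IsStrictOrderedRing K] [FloorRing K] {a b : K} (ha : 0 ≤ a) (hab : a < b) : ⌊a / b⌋ = 0 :=
  have hb : 0 < b := ha.trans_lt hab
  Int.floor_eq_zero_iff.mpr ⟨div_nonneg ha hb.le, (div_lt_one hb).mpr hab⟩

/-- Outside the fundamental domain `0 ≤ l' < M` the channel picks up the quasi-periodicity phase
`e^{2πi (k'/N) ⌊l'/M⌋}` of the Zak transform, and the Kronecker deltas become congruences. -/
theorem zak_receiver_single_path_integer_doppler_general {M N : ℕ} (hM : M ≠ 0) (hN : N ≠ 0)
    {T : ℝ} (hT : T ≠ 0) {Δf : ℝ} (hΔf : Δf = 1 / T) (q : ℤ) (h₁ : ℂ) {ν₁ : ℝ}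
    (hν₁ : ν₁ = q * Δf) (k k' l l' : ℤ) :
    h₁ * Complex.exp (2 * π * I * ((ν₁ / Δf) * ((l' : ℝ) / M))) *
        Complex.exp (2 * π * I * (((k' : ℝ) / N - ν₁ / Δf) * (⌊(l' : ℝ) / M⌋ : ℤ))) *
        w1 N T (((k' : ℝ) - (k : ℝ)) * Δf / N - ν₁) *
        w2 M T (((l' : ℝ) - (l : ℝ)) * T / M)
      = h₁ * Complex.exp (2 * π * I * ((q * l' : ℝ) / M)) *
          Complex.exp (2 * π * I * ((k' : ℝ) / N * (⌊(l' : ℝ) / M⌋ : ℤ))) *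
          (if k ≡ k' [ZMOD N] then 1 else 0) * (if l ≡ l' [ZMOD M] then 1 else 0) := by
  have doppler_ratio : (ν₁ / Δf : ℂ) = q := by
    rw [hν₁, ofReal_mul, ofReal_intCast, mul_div_cancel_right₀]
    exact ofReal_ne_zero.mpr (hΔf ▸ one_div_ne_zero hT)
  have doppler_pulse : w1 N T ((k' - k) * Δf / N - ν₁) = if k ≡ k' [ZMOD N] then 1 else 0 := by
    rw [hν₁, hΔf, (w1_periodic N hT).sub_int_mul_eq, ← Int.cast_sub, w1_int_mul_div hN hT]
    simp only [Int.modEq_iff_dvd]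
  have delay_pulse : w2 M T ((l' - l) * T / M) = if l ≡ l' [ZMOD M] then 1 else 0 := by
    rw [← Int.cast_sub, w2_int_mul_div hM hT]
    simp only [Int.modEq_iff_dvd]
  rw [doppler_ratio, doppler_pulse, delay_pulse]
  simp only [exp_two_pi_I_mul_sub_int_mul_int, ofReal_mul, ofReal_intCast, mul_div_assoc]

/-- For a single-path channel with zero delay and Doppler shift `ν₁ = qΔf`, the
Zak-receiver effective delay-Doppler channel is diagonal:
`h̃[k',l',k,l] = h₁·e^{2πi q l'/M}·δ[k−k']·δ[l−l']`. -/
theorem zak_receiver_single_path_integer_doppler (M N : ℕ) (hM : 0 < M) (hN : 0 < N)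
    (T : ℝ) (hT : 0 < T) (Δf : ℝ) (hΔf : Δf = 1 / T)
    (q : ℕ) (hq : q ≤ M - 1) (h₁ : ℂ) (ν₁ : ℝ) (hν₁ : ν₁ = q * Δf) :
    ∀ k < N, ∀ k' < N, ∀ l < M, ∀ l' < M,
      h₁ * Complex.exp (2 * π * I * ((ν₁ / Δf) * ((l' : ℝ) / M))) *
        Complex.exp (2 * π * I * (((k' : ℝ) / N - ν₁ / Δf) * (⌊(l' : ℝ) / M⌋ : ℤ))) *
        w1 N T (((k' : ℝ) - (k : ℝ)) * Δf / N - ν₁) *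
        w2 M T (((l' : ℝ) - (l : ℝ)) * T / M)
      = h₁ * Complex.exp (2 * π * I * ((q * l' : ℝ) / M)) *
          (if k = k' then 1 else 0) * (if l = l' then 1 else 0) := by
  intro k hk k' hk' l hl l' hl'
  have floor_eq : ⌊(l' : ℝ) / M⌋ = 0 :=
    floor_div_eq_zero_of_nonneg_of_lt l'.cast_nonneg (Nat.cast_lt.mpr hl')
  simpa [floor_eq, Nat.ModEq, Nat.mod_eq_of_lt, hk, hk', hl, hl'] using
    zak_receiver_single_path_integer_doppler_general hM.ne' hN.ne' hT.ne' hΔf q h₁ hν₁ k k' l l'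
end

section
/- Fix positive integers M, N, let q be an integer with 0 ≤ q ≤ M−1 and let h₁ ∈ ℂ. Define the MN × MN complex matrix Ĥ whose entry in row k'M + l' + 1 and column kM + l + 1 (0 ≤ k, k' ≤ N−1, 0 ≤ l, l' ≤ M−1) is ĥ[k',l',k,l] := h₁·e^{2πi q l'/M}·δ[k − k']·( (1/M) Σ_{m=0}^{M−1−q} e^{2πi m (l'−l)/M} ), where δ[0] = 1 and δ[m] = 0 for m ≠ 0. Then the Gram matrix Ĥ^H Ĥ has entries (Ĥ^H Ĥ)[k₁M + l₁ + 1, k₂M + l₂ + 1] = δ[k₁ − k₂]·|h₁|²·(1/M) Σ_{m=0}^{M−q−1} e^{2πi m (l₁ − l₂)/M}. In particular, Ĥ^H Ĥ is block diagonal with N identical M × M blocks. -/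
open Complex Real Finset Matrix

/-!
Up to the gain `h₁` and the block structure `1 ⊗ₖ _`, the channel matrix is `D * P`, where the
diagonal matrix `D` of Doppler phases is unitary and `P`, the Dirichlet-kernel matrix, is the
orthogonal projection onto the span of the first `M - q` characters of `ZMod M`.
Hence `(D * P)ᴴ * (D * P) = Pᴴ * P = P`.
-/

open scoped Kronecker ComplexConjugate

lemma star_mul_self_of_mem_unitary_of_isStarProjection {A : Type*} [Monoid A] [StarMul A]
    {u p : A} (hu : u ∈ unitary A) (hp : IsStarProjection p) :
    star (u * p) * (u * p) = p := by
  rw [star_mul, mul_assoc, ← mul_assoc (star u), Unitary.star_mul_self_of_mem hu, one_mul,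
    hp.isSelfAdjoint.star_eq, hp.isIdempotentElem.eq]

section CommRing

variable {K R : Type*} [RCLike K] [CommRing R] [Fintype R]

/-- The modulation operator of frequency `ω`, multiplying a signal on `R` by the character
`x ↦ ψ (ω * x)`; it models a Doppler shift. -/
def modulation [DecidableEq R] (ψ : AddChar R K) (ω : R) : Matrix R R K :=
  diagonal fun x => ψ (ω * x)

lemma modulation_mem_unitary [DecidableEq R] (ψ : AddChar R K) (ω : R) :
    modulation ψ ω ∈ unitary (Matrix R R K) := by
  have unimodular (x : R) : conj (ψ x) * ψ x = 1 := by
    rw [← AddChar.map_neg_eq_conj, ← AddChar.map_add_eq_mul, neg_add_cancel,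
      AddChar.map_zero_eq_one]
  rw [← unitaryGroup, mem_unitaryGroup_iff', modulation, star_eq_conjTranspose,
    diagonal_conjTranspose, diagonal_mul_diagonal, ← diagonal_one]
  exact congrArg diagonal (funext fun x => unimodular (ω * x))

/-- For primitive `ψ`, the matrix of the orthogonal projection onto the span of the characters
`x ↦ ψ (m * x)` with `m ∈ S`, given by its convolution kernel (a Dirichlet kernel when `S` is an
interval). -/
noncomputable def bandProjection (ψ : AddChar R K) (S : Finset R) : Matrix R R K :=
  of fun x y => (Fintype.card R : K)⁻¹ * ∑ m ∈ S, ψ (m * (x - y))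

lemma bandProjection_isSelfAdjoint (ψ : AddChar R K) (S : Finset R) :
    IsSelfAdjoint (bandProjection ψ S) := by
  ext x y
  simp only [bandProjection, star_apply, of_apply, RCLike.star_def, map_mul, map_inv₀,
    map_natCast, map_sum, ← AddChar.map_neg_eq_conj, ← mul_neg, neg_sub]

lemma sum_addChar_mul_sub_mul_addChar_mul_sub {A : Type*} [CommRing A] [IsDomain A]
    [DecidableEq R] {ψ : AddChar R A} (hψ : ψ.IsPrimitive) (m n x z : R) :
    ∑ y, ψ (m * (x - y)) * ψ (n * (y - z)) =
      if m = n then (Fintype.card R : A) * ψ (m * (x - z)) else 0 := by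
  have separate (y : R) :
      ψ (m * (x - y)) * ψ (n * (y - z)) = ψ (m * x - n * z) * ψ (y * (n - m)) := by
    rw [← AddChar.map_add_eq_mul, ← AddChar.map_add_eq_mul]
    congr 1
    ring
  simp only [separate, ← mul_sum, AddChar.sum_mulShift _ hψ, sub_eq_zero, eq_comm (a := n)]
  split_ifs with hmn
  · rw [hmn, mul_sub, mul_comm]
  · rw [Nat.cast_zero, mul_zero]

lemma bandProjection_isIdempotentElem {ψ : AddChar R K} (hψ : ψ.IsPrimitive) (S : Finset R) :
    IsIdempotentElem (bandProjection ψ S) := by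
  classical
  ext x z
  have hcard : (Fintype.card R : K) ≠ 0 := Nat.cast_ne_zero.2 Fintype.card_ne_zero
  have convolution : ∑ y, (∑ m ∈ S, ψ (m * (x - y))) * ∑ n ∈ S, ψ (n * (y - z)) =
      Fintype.card R * ∑ m ∈ S, ψ (m * (x - z)) := by
    simp only [sum_mul_sum]
    rw [sum_comm, mul_sum]
    refine sum_congr rfl fun m hm => ?_
    rw [sum_comm]
    simp only [sum_addChar_mul_sub_mul_addChar_mul_sub hψ, sum_ite_eq, if_pos hm]
  simp only [bandProjection, mul_apply, of_apply, mul_mul_mul_comm _ (∑ _ ∈ S, _), ← mul_sum,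
    convolution]
  field_simp

lemma bandProjection_isStarProjection {ψ : AddChar R K} (hψ : ψ.IsPrimitive) (S : Finset R) :
    IsStarProjection (bandProjection ψ S) :=
  ⟨bandProjection_isIdempotentElem hψ S, bandProjection_isSelfAdjoint ψ S⟩

/-- The effective channel matrix of a single path with gain `h` and Doppler frequency `ω`: in each
of the blocks, indexed by `κ`, the signal is band-limited to the frequencies in `S` and then
modulated. -/
noncomputable def channelMatrix (κ : Type*) [DecidableEq κ] [DecidableEq R] (ψ : AddChar R K)
    (h : K) (ω : R) (S : Finset R) : Matrix (κ × R) (κ × R) K :=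
  h • ((1 : Matrix κ κ K) ⊗ₖ (modulation ψ ω * bandProjection ψ S))

lemma channelMatrix_apply {κ : Type*} [DecidableEq κ] [DecidableEq R] (ψ : AddChar R K) (h : K)
    (ω : R) (S : Finset R) (k' k : κ) (x y : R) :
    channelMatrix κ ψ h ω S (k', x) (k, y) =
      h * ψ (ω * x) * (if k = k' then 1 else 0) * bandProjection ψ S x y := by
  rw [channelMatrix, Matrix.smul_apply, kroneckerMap_apply, modulation, diagonal_mul, one_apply,
    smul_eq_mul]
  simp only [eq_comm (a := k')]
  ring

theorem conjTranspose_channelMatrix_mul_self (κ : Type*) [Fintype κ] [DecidableEq κ]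
    [DecidableEq R] {ψ : AddChar R K} (hψ : ψ.IsPrimitive) (h : K) (ω : R) (S : Finset R) :
    (channelMatrix κ ψ h ω S)ᴴ * channelMatrix κ ψ h ω S =
      ((‖h‖ ^ 2 : ℝ) : K) • ((1 : Matrix κ κ K) ⊗ₖ bandProjection ψ S) := by
  rw [channelMatrix, conjTranspose_smul, smul_mul_smul_comm, conjTranspose_kronecker,
    ← mul_kronecker_mul, conjTranspose_one, one_mul, ← star_eq_conjTranspose,
    star_mul_self_of_mem_unitary_of_isStarProjection (modulation_mem_unitary ψ ω)
      (bandProjection_isStarProjection hψ S),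
    RCLike.star_def, RCLike.conj_mul, RCLike.ofReal_pow]

end CommRing

section ZMod

variable {M : ℕ} [NeZero M]

lemma zmod_finEquiv_apply (l : Fin M) : ZMod.finEquiv M l = (l : ℕ) := by
  cases M with
  | zero => exact l.elim0
  | succ n => exact (Fin.cast_val_eq_self l).symm

lemma stdAddChar_natCast_mul_natCast (a b : ℕ) :
    ZMod.stdAddChar ((a : ZMod M) * (b : ZMod M)) =
      Complex.exp (2 * π * I * ((a * b : ℝ) / M)) := by
  have := ZMod.stdAddChar_coe (N := M) (a * b)
  push_cast at this ⊢
  rw [this, mul_div_assoc]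

lemma bandProjection_stdAddChar_natCast {r : ℕ} (hr : r ≤ M) (a b : ℕ) :
    bandProjection ZMod.stdAddChar ((range r).image ((↑) : ℕ → ZMod M)) a b =
      (1 / M : ℂ) * ∑ m ∈ range r,
        Complex.exp (2 * π * I * ((m : ℝ) * ((a : ℝ) - (b : ℝ)) / M)) := by
  have cast_injOn : Set.InjOn ((↑) : ℕ → ZMod M) (range r) :=
    (CharP.natCast_injOn_Iio (ZMod M) M).mono fun m hm => (mem_range.1 hm).trans_le hr
  rw [bandProjection, of_apply, sum_image cast_injOn, ZMod.card, one_div]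
  congr 1
  refine sum_congr rfl fun m _ => ?_
  have := ZMod.stdAddChar_coe (N := M) (m * (a - b))
  push_cast at this ⊢
  rw [this, mul_div_assoc]

end ZMod

/-- The Gram matrix `Ĥᴴ Ĥ` of the two-step receiver's effective delay-Doppler channel
matrix (single path, zero delay, Doppler shift `qΔf`) is block diagonal with `N`
identical `M × M` blocks; rows/columns are indexed by the pairs `(k', l')` / `(k, l)`,
matching the row index `k'M + l' + 1` and column index `kM + l + 1`. -/
theorem two_step_gram_matrix (M N : ℕ) (hM : 0 < M) (hN : 0 < N)
    (q : ℕ) (hq : q ≤ M - 1) (h₁ : ℂ)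
    (H : Matrix (Fin N × Fin M) (Fin N × Fin M) ℂ)
    (hH : ∀ (k' : Fin N) (l' : Fin M) (k : Fin N) (l : Fin M),
      H (k', l') (k, l) = h₁ * Complex.exp (2 * π * I * ((q * (l' : ℕ) : ℝ) / M)) *
        (if k = k' then 1 else 0) *
        ((1 / M : ℂ) * ∑ m ∈ range (M - q),
          Complex.exp (2 * π * I * ((m : ℝ) * (((l' : ℕ) : ℝ) - ((l : ℕ) : ℝ)) / M)))) :
    ∀ (k₁ : Fin N) (l₁ : Fin M) (k₂ : Fin N) (l₂ : Fin M),
      (Hᴴ * H) (k₁, l₁) (k₂, l₂) =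
        (if k₁ = k₂ then 1 else 0) * (‖h₁‖ ^ 2 : ℝ) *
          ((1 / M : ℂ) * ∑ m ∈ range (M - q),
            Complex.exp (2 * π * I * ((m : ℝ) * (((l₁ : ℕ) : ℝ) - ((l₂ : ℕ) : ℝ)) / M))) := by
  have : NeZero M := ⟨hM.ne'⟩
  let band : Finset (ZMod M) := (range (M - q)).image (↑)
  let e : Fin N × Fin M ≃ Fin N × ZMod M := (Equiv.refl _).prodCongr (ZMod.finEquiv M).toEquiv
  have he (k : Fin N) (l : Fin M) : e (k, l) = (k, ((l : ℕ) : ZMod M)) :=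
    congrArg (Prod.mk k) (zmod_finEquiv_apply l)
  have H_eq : H = (channelMatrix (Fin N) ZMod.stdAddChar h₁ (q : ZMod M) band).submatrix e e := by
    ext ⟨k', l'⟩ ⟨k, l⟩
    rw [hH, submatrix_apply, he, he, channelMatrix_apply, stdAddChar_natCast_mul_natCast,
      bandProjection_stdAddChar_natCast (Nat.sub_le M q)]
  intro k₁ l₁ k₂ l₂
  rw [H_eq, conjTranspose_submatrix, submatrix_mul_equiv,
    conjTranspose_channelMatrix_mul_self _ (ZMod.isPrimitive_stdAddChar M), submatrix_apply,
    he, he, Matrix.smul_apply, kroneckerMap_apply, one_apply,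
    bandProjection_stdAddChar_natCast (Nat.sub_le M q), smul_eq_mul]
  exact (mul_left_comm _ _ _).trans (mul_assoc _ _ _).symm
end

section
/- Fix a positive integer M, an integer q with 0 ≤ q ≤ M−1, h₁ ∈ ℂ, and a real ρ ≥ 0. Define the M × M complex matrix A with entries A[l₁+1, l₂+1] = |h₁|²·(1/M) Σ_{m=0}^{M−q−1} e^{2πi m (l₁ − l₂)/M} for 0 ≤ l₁, l₂ ≤ M−1. Then det(I_M + ρA) = (1 + ρ|h₁|²)^{M−q}, and consequently the spectral efficiency of the two-step receiver equals (1/M)·log₂ det(I_M + ρA) = (1 − q/M)·log₂(1 + ρ|h₁|²). -/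
open Complex Real Finset Matrix

/-! The phases `e^{2πi m (l₁ - l₂) / M}` make `ρA` the Fourier multiplier on `ℤ/M` whose symbol
is `ρ|h₁|²` at the frequencies `m < M - q` and `0` at the others. The discrete Fourier transform
diagonalizes it, so `det (I + ρA)` is the product of the numbers `1 + symbol`. -/

section FourierMultiplier

variable {K : Type*} [Field K] {n : ℕ} {ζ : K}

/-- The unnormalized `n × n` discrete Fourier transform matrix, meant for `ζ` a primitive `n`-th
root of unity. Passing to `ζ⁻¹` exchanges analysis and synthesis. -/
def fourierMatrix (n : ℕ) (ζ : K) : Matrix (Fin n) (Fin n) K :=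
  of fun j k => ζ ^ (j * k : ℕ)

/-- The Fourier multiplier with symbol `a`: a vector is expanded in the exponentials
`j ↦ ζ ^ (j * m)`, and its `m`-th coefficient is multiplied by `a m`. -/
def fourierMultiplier (ζ : K) (a : Fin n → K) : Matrix (Fin n) (Fin n) K :=
  (n : K)⁻¹ • (fourierMatrix n ζ * diagonal a * fourierMatrix n ζ⁻¹)

lemma fourierMultiplier_apply (ζ : K) (a : Fin n → K) (j k : Fin n) :
    fourierMultiplier ζ a j k =
      (n : K)⁻¹ * ∑ m, a m * (ζ ^ (j * m : ℕ) * ζ⁻¹ ^ (m * k : ℕ)) := by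
  rw [fourierMultiplier, Matrix.smul_apply, smul_eq_mul, mul_apply]
  simp only [mul_diagonal, fourierMatrix, of_apply]
  congr! 2 with m
  ring

lemma fourierMatrix_inv_mul_fourierMatrix (hζ : IsPrimitiveRoot ζ n) :
    fourierMatrix n ζ⁻¹ * fourierMatrix n ζ = (n : K) • 1 := by
  ext j k
  have hζ0 : ζ ≠ 0 := hζ.ne_zero j.pos.ne'
  have entry_eq_geom_sum : (fourierMatrix n ζ⁻¹ * fourierMatrix n ζ) j k =
      ∑ l ∈ range n, (ζ ^ (k : ℕ) / ζ ^ (j : ℕ)) ^ l := by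
    rw [mul_apply, ← Fin.sum_univ_eq_sum_range]
    refine sum_congr rfl fun l _ => ?_
    simp only [fourierMatrix, of_apply, div_pow, ← pow_mul, inv_pow, mul_comm (l : ℕ)]
    rw [div_eq_inv_mul]
  rw [entry_eq_geom_sum, Matrix.smul_apply, smul_eq_mul]
  obtain rfl | hjk := eq_or_ne j k
  · simp [hζ0]
  · have hratio_pow : (ζ ^ (k : ℕ) / ζ ^ (j : ℕ)) ^ n = 1 := by
      rw [div_pow, pow_right_comm, pow_right_comm ζ j, hζ.pow_eq_one, one_pow, one_pow, div_one]
    have hratio_ne : ζ ^ (k : ℕ) / ζ ^ (j : ℕ) ≠ 1 := by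
      rw [Ne, div_eq_one_iff_eq (pow_ne_zero _ hζ0)]
      exact fun hpow => hjk (Fin.ext (hζ.pow_inj j.isLt k.isLt hpow.symm))
    rw [geom_sum_eq hratio_ne, hratio_pow, sub_self, zero_div, one_apply_ne hjk, mul_zero]

theorem det_one_add_fourierMultiplier (hζ : IsPrimitiveRoot ζ n) (a : Fin n → K) :
    (1 + fourierMultiplier ζ a).det = ∏ m, (1 + a m) := by
  obtain rfl | hn := eq_or_ne n 0
  · simp
  have : NeZero n := ⟨hn⟩
  have hnK : (n : K) ≠ 0 := hζ.neZero'.out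
  calc (1 + fourierMultiplier ζ a).det
      = (1 + (n : K)⁻¹ • (fourierMatrix n ζ⁻¹ * fourierMatrix n ζ * diagonal a)).det := by
        rw [fourierMultiplier, ← Matrix.mul_smul, det_one_add_mul_comm, Matrix.smul_mul,
          Matrix.mul_assoc]
    _ = (diagonal fun m => 1 + a m).det := by
        rw [fourierMatrix_inv_mul_fourierMatrix hζ, Matrix.smul_mul, Matrix.one_mul,
          inv_smul_smul₀ hnK, ← diagonal_one, diagonal_add]
    _ = ∏ m, (1 + a m) := det_diagonal

end FourierMultiplier

lemma filter_range_lt {n r : ℕ} (hr : r ≤ n) : {m ∈ range n | m < r} = range r := by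
  ext m
  simp only [mem_filter, mem_range]
  lia

section LowPassSymbol

variable {R : Type*} [CommSemiring R] {n r : ℕ}

/-- The symbol of `c` times the projection onto the frequencies `m < r`. -/
def lowPassSymbol (n r : ℕ) (c : R) (m : Fin n) : R :=
  if (m : ℕ) < r then c else 0

lemma sum_lowPassSymbol_mul (hr : r ≤ n) (c : R) (f : ℕ → R) :
    ∑ m, lowPassSymbol n r c m * f m = c * ∑ m ∈ range r, f m := by
  simp only [lowPassSymbol, ite_mul, zero_mul]
  rw [Fin.sum_univ_eq_sum_range (fun m => if m < r then c * f m else 0), ← sum_filter,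
    filter_range_lt hr, mul_sum]

lemma prod_one_add_lowPassSymbol (hr : r ≤ n) (c : R) :
    ∏ m, (1 + lowPassSymbol n r c m) = (1 + c) ^ r := by
  simp only [lowPassSymbol, add_ite, add_zero]
  rw [Fin.prod_univ_eq_prod_range (fun m => if m < r then 1 + c else 1), ← prod_filter,
    filter_range_lt hr, prod_const, card_range]

end LowPassSymbol

lemma exp_two_pi_mul_I_mul_sub_div (M m j k : ℕ) :
    Complex.exp (2 * π * I * ((m : ℝ) * ((j : ℝ) - (k : ℝ)) / M)) =
      Complex.exp (2 * π * I / M) ^ (j * m) * (Complex.exp (2 * π * I / M))⁻¹ ^ (m * k) := by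
  rw [← Complex.exp_neg, ← Complex.exp_nat_mul, ← Complex.exp_nat_mul, ← Complex.exp_add]
  congr 1
  push_cast
  ring

/-- For the diagonal block `A` of the two-step receiver's Gram matrix,
`det(I + ρA) = (1 + ρ|h₁|²)^{M−q}`, so the spectral efficiency of the two-step
receiver is `(1/M)·log₂ det(I + ρA) = (1 − q/M)·log₂(1 + ρ|h₁|²)`. -/
theorem two_step_receiver_spectral_efficiency (M : ℕ) (hM : 0 < M)
    (q : ℕ) (hq : q ≤ M - 1) (h₁ : ℂ) (ρ : ℝ) (hρ : 0 ≤ ρ)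
    (A : Matrix (Fin M) (Fin M) ℂ)
    (hA : ∀ l₁ l₂ : Fin M, A l₁ l₂ = (‖h₁‖ ^ 2 : ℝ) *
      ((1 / M : ℂ) * ∑ m ∈ range (M - q),
        Complex.exp (2 * π * I * ((m : ℝ) * (((l₁ : ℕ) : ℝ) - ((l₂ : ℕ) : ℝ)) / M)))) :
    (1 + (ρ : ℂ) • A).det = (((1 + ρ * ‖h₁‖ ^ 2 : ℝ) : ℂ)) ^ (M - q) ∧
    (1 / (M : ℝ)) * Real.logb 2 ((1 + (ρ : ℂ) • A).det.re) =
      (1 - (q : ℝ) / M) * Real.logb 2 (1 + ρ * ‖h₁‖ ^ 2) := by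
  have hM0 : (M : ℝ) ≠ 0 := Nat.cast_ne_zero.mpr hM.ne'
  have hband : M - q ≤ M := Nat.sub_le M q
  have hρA : (ρ : ℂ) • A = fourierMultiplier (Complex.exp (2 * π * I / M))
      (lowPassSymbol M (M - q) ((ρ * ‖h₁‖ ^ 2 : ℝ) : ℂ)) := by
    ext l₁ l₂
    rw [fourierMultiplier_apply, sum_lowPassSymbol_mul hband _ fun m =>
      Complex.exp (2 * π * I / M) ^ (l₁ * m : ℕ) * (Complex.exp (2 * π * I / M))⁻¹ ^ (m * l₂ : ℕ)]
    simp only [Matrix.smul_apply, smul_eq_mul, hA, exp_two_pi_mul_I_mul_sub_div]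
    push_cast
    ring
  have hdet : (1 + (ρ : ℂ) • A).det = ((1 + ρ * ‖h₁‖ ^ 2 : ℝ) : ℂ) ^ (M - q) := by
    rw [hρA, det_one_add_fourierMultiplier (Complex.isPrimitiveRoot_exp M hM.ne'),
      prod_one_add_lowPassSymbol hband, ofReal_add, ofReal_one]
  refine ⟨hdet, ?_⟩
  rw [hdet, ← ofReal_pow, ofReal_re, Real.logb_pow, Nat.cast_sub (hq.trans (Nat.sub_le M 1))]
  field_simp
end

section
/- Fix positive integers M, N, an integer q with 0 ≤ q ≤ M−1, h₁ ∈ ℂ, and a real ρ ≥ 0. Define the MN × MN complex matrix H whose entry in row k'M + l' + 1 and column kM + l + 1 (0 ≤ k, k' ≤ N−1, 0 ≤ l, l' ≤ M−1) is h₁·e^{2πi q l'/M}·δ[k − k']·δ[l − l'], where δ[0] = 1 and δ[m] = 0 for m ≠ 0. Then H^H H = |h₁|²·I_{MN}, and consequently the spectral efficiency of the Zak receiver equals (1/(MN))·log₂ det(I_{MN} + ρ·H^H H) = log₂(1 + ρ|h₁|²), independently of the Doppler index q — the same as the capacity of an ideal single-path channel without any Doppler shift. -/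
open Complex Real Finset Matrix

/-!
A Doppler shift by a multiple of the subcarrier spacing only multiplies each delay-Doppler symbol
by a phase, so the channel matrix is diagonal with entries of constant modulus `|h₁|`. The log-det
of a diagonal channel splits into a sum over parallel scalar channels, in which only the moduli of
the gains appear; the phases, and with them the Doppler index, drop out.
-/

section ChannelMatrix

variable {n 𝕜 : Type*} [Fintype n] [DecidableEq n] [RCLike 𝕜]

/-- The spectral efficiency `(1 / n) log₂ det (I + ρ Hᴴ H)` of an `n × n` channel matrix `H` at
signal-to-noise ratio `ρ`. The determinant is a real number, so taking its real part only changes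
its type. -/
noncomputable def spectralEfficiency (ρ : ℝ) (H : Matrix n n 𝕜) : ℝ :=
  1 / Fintype.card n * Real.logb 2 (RCLike.re (1 + (ρ : 𝕜) • (Hᴴ * H)).det)

theorem diagonal_conjTranspose_mul_diagonal_self (d : n → 𝕜) :
    (diagonal d)ᴴ * diagonal d = diagonal fun i ↦ ((‖d i‖ ^ 2 : ℝ) : 𝕜) := by
  simp [diagonal_conjTranspose, diagonal_mul_diagonal, RCLike.conj_mul]

theorem det_one_add_smul_diagonal_conjTranspose_mul_self (ρ : ℝ) (d : n → 𝕜) :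
    (1 + (ρ : 𝕜) • ((diagonal d)ᴴ * diagonal d)).det =
      ((∏ i, (1 + ρ * ‖d i‖ ^ 2) : ℝ) : 𝕜) := by
  rw [diagonal_conjTranspose_mul_diagonal_self, ← diagonal_one, ← diagonal_smul, diagonal_add,
    det_diagonal]
  simp

theorem spectralEfficiency_diagonal {ρ : ℝ} (hρ : 0 ≤ ρ) (d : n → 𝕜) :
    spectralEfficiency ρ (diagonal d) =
      1 / Fintype.card n * ∑ i, Real.logb 2 (1 + ρ * ‖d i‖ ^ 2) := by
  have factor_ne_zero (i : n) : 1 + ρ * ‖d i‖ ^ 2 ≠ 0 := by positivity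
  rw [spectralEfficiency, det_one_add_smul_diagonal_conjTranspose_mul_self, RCLike.ofReal_re,
    Real.logb_prod _ _ fun i _ ↦ factor_ne_zero i]

theorem spectralEfficiency_diagonal_of_norm_eq [Nonempty n] {ρ r : ℝ} (hρ : 0 ≤ ρ) {d : n → 𝕜}
    (hd : ∀ i, ‖d i‖ = r) :
    spectralEfficiency ρ (diagonal d) = Real.logb 2 (1 + ρ * r ^ 2) := by
  simp [spectralEfficiency_diagonal hρ, hd]

end ChannelMatrix

theorem eq_diagonal_of_apply_eq_mul_ite {κ ι R : Type*} [DecidableEq κ] [DecidableEq ι]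
    [MulZeroOneClass R] {H : Matrix (κ × ι) (κ × ι) R} {g : κ → ι → R}
    (hH : ∀ k' l' k l, H (k', l') (k, l) =
      g k' l' * (if k = k' then 1 else 0) * (if l = l' then 1 else 0)) :
    H = diagonal fun p ↦ g p.1 p.2 := by
  ext ⟨k', l'⟩ ⟨k, l⟩
  simp only [hH, diagonal_apply, Prod.mk.injEq, eq_comm (a := k'), eq_comm (a := l')]
  by_cases hk : k = k' <;> by_cases hl : l = l' <;> simp [hk, hl]

theorem zak_receiver_spectral_efficiency_general {κ ι 𝕜 : Type*} [Fintype κ] [Fintype ι]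
    [DecidableEq κ] [DecidableEq ι] [Nonempty κ] [Nonempty ι] [RCLike 𝕜]
    {g : κ → ι → 𝕜} {r ρ : ℝ} (hg : ∀ k l, ‖g k l‖ = r) (hρ : 0 ≤ ρ)
    {H : Matrix (κ × ι) (κ × ι) 𝕜}
    (hH : ∀ k' l' k l, H (k', l') (k, l) =
      g k' l' * (if k = k' then 1 else 0) * (if l = l' then 1 else 0)) :
    Hᴴ * H = ((r ^ 2 : ℝ) : 𝕜) • (1 : Matrix (κ × ι) (κ × ι) 𝕜) ∧
      spectralEfficiency ρ H = Real.logb 2 (1 + ρ * r ^ 2) := by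
  obtain rfl := eq_diagonal_of_apply_eq_mul_ite hH
  refine ⟨?_, spectralEfficiency_diagonal_of_norm_eq hρ fun p ↦ hg p.1 p.2⟩
  simp only [diagonal_conjTranspose_mul_diagonal_self, hg, smul_one_eq_diagonal]

theorem norm_mul_exp_two_pi_mul_I_mul_ofReal (z : ℂ) (t : ℝ) :
    ‖z * Complex.exp (2 * π * I * t)‖ = ‖z‖ := by
  simp [Complex.norm_exp]

/-- For a single-path channel with zero delay and Doppler shift `qΔf`, the Zak-receiver
effective delay-Doppler channel matrix `H` satisfies `Hᴴ H = |h₁|²·I`, so the spectral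
efficiency of the Zak receiver is
`(1/(MN))·log₂ det(I + ρ Hᴴ H) = log₂(1 + ρ|h₁|²)`, independently of `q` — the same as
the capacity of an ideal single-path channel without any Doppler shift. Rows/columns are
indexed by the pairs `(k', l')` / `(k, l)`, matching the row index `k'M + l' + 1` and
column index `kM + l + 1`. -/
theorem zak_receiver_spectral_efficiency (M N : ℕ) (hM : 0 < M) (hN : 0 < N)
    (q : ℕ) (hq : q ≤ M - 1) (h₁ : ℂ) (ρ : ℝ) (hρ : 0 ≤ ρ)
    (H : Matrix (Fin N × Fin M) (Fin N × Fin M) ℂ)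
    (hH : ∀ (k' : Fin N) (l' : Fin M) (k : Fin N) (l : Fin M),
      H (k', l') (k, l) = h₁ * Complex.exp (2 * π * I * ((q * (l' : ℕ) : ℝ) / M)) *
        (if k = k' then 1 else 0) * (if l = l' then 1 else 0)) :
    Hᴴ * H = ((‖h₁‖ ^ 2 : ℝ) : ℂ) • (1 : Matrix (Fin N × Fin M) (Fin N × Fin M) ℂ) ∧
    (1 / ((M : ℝ) * N)) * Real.logb 2 ((1 + (ρ : ℂ) • (Hᴴ * H)).det.re) =
      Real.logb 2 (1 + ρ * ‖h₁‖ ^ 2) := by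
  have : NeZero M := ⟨hM.ne'⟩
  have : NeZero N := ⟨hN.ne'⟩
  have norm_gain (_ : Fin N) (l' : Fin M) :
      ‖h₁ * Complex.exp (2 * π * I * ((q * (l' : ℕ) : ℝ) / M))‖ = ‖h₁‖ := by
    exact_mod_cast norm_mul_exp_two_pi_mul_I_mul_ofReal h₁ (q * (l' : ℕ) / M)
  simpa [spectralEfficiency, mul_comm] using
    zak_receiver_spectral_efficiency_general norm_gain hρ hH
end
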